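/- arXiv:2510.07157 — 4 statements merged into one kernel-verified Lean document; each statement's English description precedes it below -/
import Mathlib

section
/- Let B, Q be |R|×|R| real matrices with Q symmetric, s ∈ ℝ^{|R|}, λ ∈ ℝ, x_u ∈ ℝ^{|R|} with x_u ≥ 0, and p_l ≤ p_u in ℝ^{|R|}. Let μ be a Borel probability measure on ℝ^{|R|} (in the paper, the Gaussian N(μ₀,Σ)), and let ζ^{(1)}, ζ^{(2)}, … be an i.i.d. sequence of random vectors with common law μ on a probability space (Ω, P). Define h(p,ζ) = (1/2)⟨Q·x(p,ζ), x(p,ζ)⟩ − ⟨s, x(p,ζ)⟩ with x(p,ζ) = proj_{[0,x_u]}(B·p + ζ), f(p) = (λ/2)‖p‖₂² + ∫ h(p,ζ) dμ(ζ), and f_N(p) = (λ/2)‖p‖₂² + (1/N)Σ_{i=1}^N h(p, ζ^{(i)}). Then almost surely, sup_{p ∈ [p_l, p_u]} | f_N(p) − f(p) | → 0 as N → ∞. -/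
open Matrix MeasureTheory ProbabilityTheory Filter

/-- Coordinatewise projection onto the box `[0, x_u]`. -/
noncomputable def boxProj {n : ℕ} (xu : Fin n → ℝ) (y : Fin n → ℝ) : Fin n → ℝ :=
  fun j => max 0 (min (y j) (xu j))

/-- The per-scenario congestion cost
`h(p,ζ) = (1/2)⟨Q x(p,ζ), x(p,ζ)⟩ - ⟨s, x(p,ζ)⟩` with `x(p,ζ) = proj_{[0,x_u]}(B p + ζ)`. -/
noncomputable def congCost {n : ℕ} (Q : Matrix (Fin n) (Fin n) ℝ) (s : Fin n → ℝ)
    (B : Matrix (Fin n) (Fin n) ℝ) (xu : Fin n → ℝ) (p z : Fin n → ℝ) : ℝ :=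
  (1 / 2 : ℝ) * (Q.mulVec (boxProj xu (B.mulVec p + z)) ⬝ᵥ boxProj xu (B.mulVec p + z)) -
    s ⬝ᵥ boxProj xu (B.mulVec p + z)

/-!
A random cost that is jointly continuous in the scenario and in the decision, and dominated by an
integrable function of the scenario, is an integrable random element of the Banach space `C(K, E)`
for every compact set `K` of decisions. The strong law of large numbers in `C(K, E)` is convergence
in the sup norm, that is, uniform convergence on `K`. The congestion cost is such a cost: it is a
polynomial evaluated at a continuous function of price and noise with values in the compact box
`[0, x_u]`, hence bounded. The regularizer `(λ/2)‖p‖₂²` cancels in `f_N - f`.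
-/

section StrongLaw

open scoped Topology

variable {Ω Z E : Type*} [MeasurableSpace Ω] [MeasurableSpace Z] [NormedAddCommGroup E]
  [NormedSpace ℝ E] [CompleteSpace E] {P : Measure Ω} {μ : Measure Z} {X : ℕ → Ω → Z}

lemma ae_tendsto_average_comp (hX : ∀ i, HasLaw (X i) μ P)
    (hindep : Pairwise fun i j => X i ⟂ᵢ[P] X j) {F : Z → E} (hF : Integrable F μ) :
    ∀ᵐ ω ∂P, Tendsto (fun N : ℕ => (N : ℝ)⁻¹ • ∑ i ∈ Finset.range N, F (X i ω)) atTop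
      (𝓝 (∫ z, F z ∂μ)) := by
  borelize E
  have hF_map (i : ℕ) : AEMeasurable F (P.map (X i)) := (hX i).map_eq ▸ hF.1.aemeasurable
  have hint : Integrable (F ∘ X 0) P :=
    Integrable.comp_aemeasurable ((hX 0).map_eq ▸ hF) (hX 0).aemeasurable
  have hindep_comp : Pairwise fun i j => (F ∘ X i) ⟂ᵢ[P] (F ∘ X j) := fun i j hij =>
    (hindep hij).comp₀ (hX i).aemeasurable (hX j).aemeasurable (hF_map i) (hF_map j)
  have hident_comp (i : ℕ) : IdentDistrib (F ∘ X i) (F ∘ X 0) P P :=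
    IdentDistrib.comp_of_aemeasurable ⟨(hX i).aemeasurable, (hX 0).aemeasurable,
      (hX i).map_eq.trans (hX 0).map_eq.symm⟩ (hF_map i)
  rw [← (hX 0).integral_comp hF.1]
  exact strong_law_ae (fun i => F ∘ X i) hint hindep_comp hident_comp

variable {Y : Type*} [TopologicalSpace Y]

lemma ae_tendstoUniformly_average_continuousMap [CompactSpace Y]
    (hX : ∀ i, HasLaw (X i) μ P) (hindep : Pairwise fun i j => X i ⟂ᵢ[P] X j)
    {F : Z → C(Y, E)} (hF : Integrable F μ) :
    ∀ᵐ ω ∂P, TendstoUniformly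
      (fun (N : ℕ) y => (N : ℝ)⁻¹ • ∑ i ∈ Finset.range N, F (X i ω) y)
      (fun y => ∫ z, F z y ∂μ) atTop := by
  filter_upwards [ae_tendsto_average_comp hX hindep hF] with ω hω
  simpa [ContinuousMap.tendsto_iff_tendstoUniformly, ← ContinuousMap.integral_apply hF] using hω

theorem ae_tendstoUniformlyOn_average [TopologicalSpace Z]
    [SecondCountableTopology Z] [OpensMeasurableSpace Z]
    (hX : ∀ i, HasLaw (X i) μ P) (hindep : Pairwise fun i j => X i ⟂ᵢ[P] X j)
    {K : Set Y} (hK : IsCompact K) {g : Z → Y → E}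
    (hg : ContinuousOn (Function.uncurry g) (Set.univ ×ˢ K)) {bound : Z → ℝ}
    (hbound : Integrable bound μ) (hg_le : ∀ᵐ z ∂μ, ∀ y ∈ K, ‖g z y‖ ≤ bound z) :
    ∀ᵐ ω ∂P, TendstoUniformlyOn
      (fun (N : ℕ) y => (N : ℝ)⁻¹ • ∑ i ∈ Finset.range N, g (X i ω) y)
      (fun y => ∫ z, g z y ∂μ) atTop K := by
  have : CompactSpace K := isCompact_iff_compactSpace.mp hK
  have hg_right (z : Z) : ContinuousOn (g z) K :=
    hg.comp (Continuous.prodMk_right z).continuousOn fun _ hy => ⟨trivial, hy⟩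
  have hint : Integrable (fun z => ContinuousMap.mkD (K.domRestrict (g z)) 0) μ :=
    ⟨ContinuousMap.aeStronglyMeasurable_mkD_restrict_of_uncurry g 0 hg,
      ContinuousMap.hasFiniteIntegral_mkD_restrict_of_bound g 0 (ae_of_all μ hg_right) bound
        hbound.2 hg_le⟩
  filter_upwards [ae_tendstoUniformly_average_continuousMap hX hindep hint] with ω hω
  simp only [ContinuousMap.mkD_apply_of_continuousOn (hg_right _)] at hω
  exact tendstoUniformlyOn_iff_tendstoUniformly_comp_coe.mpr hω

end StrongLaw

section CongestionCost

variable {n : ℕ}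

lemma boxProj_mem_Icc {xu : Fin n → ℝ} (hxu : 0 ≤ xu) (y : Fin n → ℝ) :
    boxProj xu y ∈ Set.Icc 0 xu :=
  ⟨fun _ => le_max_left _ _, fun j => max_le (hxu j) (min_le_right _ _)⟩

lemma continuous_boxProj (xu : Fin n → ℝ) : Continuous (boxProj xu) := by
  unfold boxProj
  fun_prop

/-- The cost `(1/2)⟨Q x, x⟩ - ⟨s, x⟩` of a flow `x`; `congCost` is its value at the flow that
a price and a scenario induce. -/
noncomputable def flowCost (Q : Matrix (Fin n) (Fin n) ℝ) (s x : Fin n → ℝ) : ℝ :=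
  (1 / 2 : ℝ) * (Q *ᵥ x ⬝ᵥ x) - s ⬝ᵥ x

lemma continuous_flowCost (Q : Matrix (Fin n) (Fin n) ℝ) (s : Fin n → ℝ) :
    Continuous (flowCost Q s) := by
  unfold flowCost
  fun_prop

lemma continuous_uncurry_congCost (Q : Matrix (Fin n) (Fin n) ℝ) (s : Fin n → ℝ)
    (B : Matrix (Fin n) (Fin n) ℝ) (xu : Fin n → ℝ) :
    Continuous (Function.uncurry fun z p => congCost Q s B xu p z) := by
  have hflow : Continuous fun q : (Fin n → ℝ) × (Fin n → ℝ) => boxProj xu (B *ᵥ q.2 + q.1) :=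
    (continuous_boxProj xu).comp (by fun_prop)
  exact (continuous_flowCost Q s).comp hflow

lemma exists_bound_congCost (Q : Matrix (Fin n) (Fin n) ℝ) (s : Fin n → ℝ)
    (B : Matrix (Fin n) (Fin n) ℝ) {xu : Fin n → ℝ} (hxu : 0 ≤ xu) :
    ∃ C : ℝ, ∀ p z, ‖congCost Q s B xu p z‖ ≤ C := by
  obtain ⟨C, hC⟩ :=
    isCompact_Icc.exists_bound_of_continuousOn (continuous_flowCost Q s).continuousOn
  exact ⟨C, fun p z => hC _ (boxProj_mem_Icc hxu (B *ᵥ p + z))⟩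

theorem fN_uniform_consistency_general (B Q : Matrix (Fin n) (Fin n) ℝ) (s : Fin n → ℝ) (lam : ℝ)
    {xu : Fin n → ℝ} (hxu : 0 ≤ xu) {K : Set (Fin n → ℝ)} (hK : IsCompact K)
    {μ : Measure (Fin n → ℝ)} [IsProbabilityMeasure μ]
    {Ω : Type*} [MeasurableSpace Ω] {P : Measure Ω} {ζ : ℕ → Ω → (Fin n → ℝ)}
    (hζ : ∀ i, HasLaw (ζ i) μ P) (hindep : Pairwise fun i j => ζ i ⟂ᵢ[P] ζ j) :
    ∀ᵐ ω ∂P, TendstoUniformlyOn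
      (fun (N : ℕ) (p : Fin n → ℝ) =>
        lam / 2 * ∑ j, p j ^ 2 +
          (1 / N : ℝ) * ∑ i ∈ Finset.range N, congCost Q s B xu p (ζ i ω))
      (fun p : Fin n → ℝ =>
        lam / 2 * ∑ j, p j ^ 2 + ∫ z, congCost Q s B xu p z ∂μ)
      atTop K := by
  obtain ⟨C, hC⟩ := exists_bound_congCost Q s B hxu
  filter_upwards [ae_tendstoUniformlyOn_average hζ hindep hK
    (continuous_uncurry_congCost Q s B xu).continuousOn (integrable_const C)
    (ae_of_all μ fun z p _ => hC p z)] with ω hω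
  simpa only [Metric.tendstoUniformlyOn_iff, dist_add_left, one_div, smul_eq_mul] using hω

end CongestionCost

/-- (Uniform consistency of the Monte Carlo objective.)
For i.i.d. scenarios `ζ⁽¹⁾, ζ⁽²⁾, …` with common law `μ`, almost surely
`sup_{p ∈ [p_l,p_u]} |f_N(p) - f(p)| → 0` as `N → ∞`, i.e. the sample-average objectives
`f_N` converge uniformly on the box `[p_l, p_u]` to the expected objective `f`.
(Here `‖p‖₂² = Σ_j p_j²`.) -/
theorem fN_uniform_consistency {n : ℕ}
    (B Q : Matrix (Fin n) (Fin n) ℝ) (hQ : Q.IsSymm)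
    (s : Fin n → ℝ) (lam : ℝ)
    (xu : Fin n → ℝ) (hxu : ∀ j, 0 ≤ xu j)
    (pl pu : Fin n → ℝ) (hplu : pl ≤ pu)
    (μ : Measure (Fin n → ℝ)) [IsProbabilityMeasure μ]
    {Ω : Type*} [MeasurableSpace Ω] (P : Measure Ω) [IsProbabilityMeasure P]
    (ζ : ℕ → Ω → (Fin n → ℝ))
    (hmeas : ∀ i, Measurable (ζ i))
    (hindep : iIndepFun ζ P)
    (hident : ∀ i, P.map (ζ i) = μ) :
    ∀ᵐ ω ∂P, TendstoUniformlyOn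
      (fun (N : ℕ) (p : Fin n → ℝ) =>
        lam / 2 * ∑ j, p j ^ 2 +
          (1 / N : ℝ) * ∑ i ∈ Finset.range N, congCost Q s B xu p (ζ i ω))
      (fun p : Fin n → ℝ =>
        lam / 2 * ∑ j, p j ^ 2 + ∫ z, congCost Q s B xu p z ∂μ)
      atTop (Set.Icc pl pu) :=
  fN_uniform_consistency_general B Q s lam hxu isCompact_Icc
    (fun i => ⟨(hmeas i).aemeasurable, hident i⟩) fun _ _ hij => hindep.indepFun hij
end

section
/- Let B, Q be |R|×|R| real matrices with Q symmetric, s ∈ ℝ^{|R|}, λ ∈ ℝ, x_u ∈ ℝ^{|R|} with x_u > 0 coordinatewise, and ζ^{(1)}, …, ζ^{(N)} ∈ ℝ^{|R|}. Define x^{(i)}(p) = proj_{[0,x_u]}(B·p + ζ^{(i)}) and f_N(p) = (λ/2)‖p‖₂² + (1/N)Σ_{i=1}^N [ (1/2)⟨Q·x^{(i)}(p), x^{(i)}(p)⟩ − ⟨s, x^{(i)}(p)⟩ ]. Suppose p* is nondegenerate: for all i, j, (B·p* + ζ^{(i)})_j ∉ {0, (x_u)_j}. Then f_N is Fréchet differentiable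 at p* with gradient ∇f_N(p*) = λ·p* + Bᵀ·( (1/N)Σ_{i=1}^N Diag(ω^{(i)})·( Q·x^{(i)}(p*) − s ) ), where ω^{(i)} ∈ {0,1}^{|R|} has ω^{(i)}_j = 1 iff 0 < (B·p* + ζ^{(i)})_j < (x_u)_j. -/
open Matrix

/-!
In coordinates, `f_N` is a linear combination of `p ↦ ‖p‖²` and of maps `p ↦ φ (Π (B p + ζ))`, where
`φ x = ½⟨Q x, x⟩ - ⟨s, x⟩` and `Π` is the box projection. For symmetric `Q` the gradient of `φ` at
`x` is `Q x - s`. Away from the boundary `Π` is, in each coordinate, locally constant or the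
identity, so its Jacobian is `Diag ω`. Precomposing with a map of Jacobian `A` multiplies the
gradient by `Aᵀ`, which turns `Q x - s` into `Bᵀ (Diag ω (Q x - s))`.
-/

section DotProduct

variable {𝕜 ι κ : Type*} [NontriviallyNormedField 𝕜] [CompleteSpace 𝕜] [Fintype ι] [Fintype κ]

/-- The functional `x ↦ c ⬝ᵥ x`. That `HasFDerivAt f (dotProductCLM c) x` holds says that `c` is
the vector of partial derivatives of `f` at `x`; it stands in for `HasGradientAt` on `ι → 𝕜`, which
carries the sup norm and hence no inner product. -/
noncomputable def dotProductCLM (c : ι → 𝕜) : (ι → 𝕜) →L[𝕜] 𝕜 :=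
  (dotProductBilin 𝕜 𝕜).toContinuousBilinearMap c

@[simp]
theorem dotProductCLM_apply (c x : ι → 𝕜) : dotProductCLM c x = c ⬝ᵥ x := rfl

theorem dotProductCLM_comp_mulVecLin (c : κ → 𝕜) (A : Matrix κ ι 𝕜) :
    dotProductCLM c ∘L A.mulVecLin.toContinuousLinearMap = dotProductCLM (Aᵀ *ᵥ c) := by
  ext1 x
  simp [dotProduct_mulVec, mulVec_transpose]

theorem hasFDerivAt_comp_of_mulVecLin {f : (κ → 𝕜) → 𝕜} {g : (ι → 𝕜) → κ → 𝕜} {c : κ → 𝕜}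
    {A : Matrix κ ι 𝕜} {x : ι → 𝕜} (hf : HasFDerivAt f (dotProductCLM c) (g x))
    (hg : HasFDerivAt g A.mulVecLin.toContinuousLinearMap x) :
    HasFDerivAt (fun y => f (g y)) (dotProductCLM (Aᵀ *ᵥ c)) x :=
  dotProductCLM_comp_mulVecLin c A ▸ hf.comp x hg

theorem hasFDerivAt_mulVec_dotProduct_self (A : Matrix ι ι 𝕜) (x : ι → 𝕜) :
    HasFDerivAt (fun y => A *ᵥ y ⬝ᵥ y) (dotProductCLM ((A + Aᵀ) *ᵥ x)) x := by
  have h := (dotProductBilin 𝕜 𝕜).toContinuousBilinearMap.hasFDerivAt_of_bilinear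
    A.mulVecLin.toContinuousLinearMap.hasFDerivAt (hasFDerivAt_id x)
  refine h.congr_fderiv ?_
  ext1 v
  simp [add_mulVec, mulVec_transpose, dotProduct_mulVec, dotProduct_comm]

theorem hasFDerivAt_half_mulVec_dotProduct_self_sub [NeZero (2 : 𝕜)] {Q : Matrix ι ι 𝕜}
    (hQ : Q.IsSymm) (s x : ι → 𝕜) :
    HasFDerivAt (fun y => 1 / 2 * (Q *ᵥ y ⬝ᵥ y) - s ⬝ᵥ y) (dotProductCLM (Q *ᵥ x - s)) x := by
  have h := ((hasFDerivAt_mulVec_dotProduct_self Q x).const_mul (1 / 2)).sub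
    (dotProductCLM s).hasFDerivAt
  refine h.congr_fderiv ?_
  ext1 v
  simp [hQ.eq, ← two_smul 𝕜 Q, smul_mulVec, inv_mul_cancel_left₀ (two_ne_zero' 𝕜)]

theorem hasFDerivAt_half_mul_dotProduct_self [NeZero (2 : 𝕜)] (a : 𝕜) (x : ι → 𝕜) :
    HasFDerivAt (fun y => a / 2 * (y ⬝ᵥ y)) (dotProductCLM (a • x)) x := by
  classical
  have h := hasFDerivAt_half_mulVec_dotProduct_self_sub ((isSymm_one (n := ι)).smul a) 0 x
  simpa [smul_mulVec, ← mul_assoc, inv_mul_eq_div] using h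

end DotProduct

theorem hasGradientAt_toLp {ι : Type*} [Fintype ι] {f : (ι → ℝ) → ℝ} {c : ι → ℝ}
    {x : EuclideanSpace ℝ ι} (hf : HasFDerivAt f (dotProductCLM c) x) :
    HasGradientAt (fun y : EuclideanSpace ℝ ι => f y) (WithLp.toLp 2 c) x := by
  rw [hasGradientAt_iff_hasFDerivAt]
  refine (hf.comp x (PiLp.hasFDerivAt_ofLp 2 x)).congr_fderiv ?_
  ext1 v
  simp [PiLp.coe_continuousLinearEquiv, EuclideanSpace.inner_eq_star_dotProduct, dotProduct_comm]

section BoxProjection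

theorem hasDerivAt_max_min {a b t : ℝ} (ha : t ≠ a) (hb : t ≠ b) :
    HasDerivAt (fun x => max a (min x b)) (if a < t ∧ t < b then 1 else 0) t := by
  rcases ha.lt_or_gt with hta | hat
  · rw [if_neg fun h => hta.not_gt h.1]
    refine (hasDerivAt_const t a).congr_of_eventuallyEq ?_
    filter_upwards [eventually_lt_nhds hta] with x hx
    exact max_eq_left ((min_le_left x b).trans hx.le)
  rcases hb.lt_or_gt with htb | hbt
  · rw [if_pos ⟨hat, htb⟩]
    refine (hasDerivAt_id t).congr_of_eventuallyEq ?_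
    filter_upwards [eventually_gt_nhds hat, eventually_lt_nhds htb] with x hax hxb
    rw [min_eq_left hxb.le, max_eq_right hax.le, id]
  · rw [if_neg fun h => hbt.not_gt h.2]
    refine (hasDerivAt_const t (max a b)).congr_of_eventuallyEq ?_
    filter_upwards [eventually_gt_nhds hbt] with x hx
    rw [min_eq_right hx.le]

variable {n : ℕ}

/-- The 0–1 activity vector `ω` of `y`, marking the coordinates of `y` strictly inside the box. -/
noncomputable def boxActivity (xu y : Fin n → ℝ) : Fin n → ℝ :=
  fun j => if 0 < y j ∧ y j < xu j then 1 else 0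

theorem hasFDerivAt_boxProj {xu y : Fin n → ℝ} (hy : ∀ j, y j ≠ 0 ∧ y j ≠ xu j) :
    HasFDerivAt (boxProj xu) (diagonal (boxActivity xu y)).mulVecLin.toContinuousLinearMap y := by
  refine hasFDerivAt_pi'.2 fun j => ?_
  have hcoord : HasFDerivAt (fun z : Fin n → ℝ => z j) (ContinuousLinearMap.proj (R := ℝ) j) y :=
    hasFDerivAt_apply j y
  refine ((hasDerivAt_max_min (hy j).1 (hy j).2).comp_hasFDerivAt y hcoord).congr_fderiv ?_
  ext1 v
  simp [boxActivity, mulVec_diagonal, -ite_smul]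

theorem hasFDerivAt_comp_boxProj_mulVec_add {m : ℕ} {φ : (Fin m → ℝ) → ℝ} {c xu ζ : Fin m → ℝ}
    {B : Matrix (Fin m) (Fin n) ℝ} {p : Fin n → ℝ}
    (hφ : HasFDerivAt φ (dotProductCLM c) (boxProj xu (B *ᵥ p + ζ)))
    (hp : ∀ j, (B *ᵥ p + ζ) j ≠ 0 ∧ (B *ᵥ p + ζ) j ≠ xu j) :
    HasFDerivAt (fun q => φ (boxProj xu (B *ᵥ q + ζ)))
      (dotProductCLM (Bᵀ *ᵥ (diagonal (boxActivity xu (B *ᵥ p + ζ)) *ᵥ c))) p := by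
  have hbox := hasFDerivAt_comp_of_mulVecLin hφ (hasFDerivAt_boxProj hp)
  rw [diagonal_transpose] at hbox
  have haffine : HasFDerivAt (fun q => B *ᵥ q + ζ) B.mulVecLin.toContinuousLinearMap p :=
    B.mulVecLin.toContinuousLinearMap.hasFDerivAt.add_const ζ
  exact hasFDerivAt_comp_of_mulVecLin (f := fun y => φ (boxProj xu y)) hbox haffine

end BoxProjection

theorem fN_gradient_at_nondegenerate_general {m n N : ℕ}
    (B : Matrix (Fin m) (Fin n) ℝ) {Q : Matrix (Fin m) (Fin m) ℝ} (hQ : Q.IsSymm)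
    (s : Fin m → ℝ) (lam : ℝ) (xu : Fin m → ℝ) (ζ : Fin N → Fin m → ℝ)
    (pstar : EuclideanSpace ℝ (Fin n))
    (hnd : ∀ i j, (B *ᵥ pstar + ζ i) j ≠ 0 ∧ (B *ᵥ pstar + ζ i) j ≠ xu j) :
    HasGradientAt
      (fun p : EuclideanSpace ℝ (Fin n) =>
        lam / 2 * ‖p‖ ^ 2 + (1 / N : ℝ) * ∑ i,
          ((1 / 2 : ℝ) * (Q *ᵥ boxProj xu (B *ᵥ p + ζ i) ⬝ᵥ boxProj xu (B *ᵥ p + ζ i)) -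
            s ⬝ᵥ boxProj xu (B *ᵥ p + ζ i)))
      (WithLp.toLp 2 (lam • pstar.ofLp + Bᵀ *ᵥ ((1 / N : ℝ) • ∑ i,
        diagonal (boxActivity xu (B *ᵥ pstar + ζ i)) *ᵥ
          (Q *ᵥ boxProj xu (B *ᵥ pstar + ζ i) - s))))
      pstar := by
  have hreg := hasFDerivAt_half_mul_dotProduct_self lam pstar.ofLp
  have hcost := fun i => hasFDerivAt_comp_boxProj_mulVec_add
    (hasFDerivAt_half_mulVec_dotProduct_self_sub hQ s _) (hnd i)
  have hmean := (HasFDerivAt.fun_sum (u := .univ) fun i _ => hcost i).const_mul (1 / N : ℝ)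
  have hnorm : ∀ p : EuclideanSpace ℝ (Fin n), ‖p‖ ^ 2 = p.ofLp ⬝ᵥ p.ofLp := fun p => by
    rw [← real_inner_self_eq_norm_sq, EuclideanSpace.inner_eq_star_dotProduct, star_trivial]
  simp only [hnorm]
  refine hasGradientAt_toLp ((hreg.add hmean).congr_fderiv ?_)
  ext1 v
  simp [mulVec_smul, mulVec_sum, sum_dotProduct, add_dotProduct, smul_dotProduct]

/-- At a nondegenerate point `p*` (no coordinate of any `B p* + ζ⁽ⁱ⁾` on the
projection boundary), the Monte Carlo objective
`f_N(p) = (λ/2)‖p‖₂² + (1/N) Σᵢ [(1/2)⟨Q x⁽ⁱ⁾(p), x⁽ⁱ⁾(p)⟩ - ⟨s, x⁽ⁱ⁾(p)⟩]`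
is (Fréchet) differentiable with gradient
`∇f_N(p*) = λ p* + Bᵀ ((1/N) Σᵢ Diag(ω⁽ⁱ⁾) (Q x⁽ⁱ⁾(p*) - s))`. -/
theorem fN_gradient_at_nondegenerate {n N : ℕ}
    (B Q : Matrix (Fin n) (Fin n) ℝ) (hQ : Q.IsSymm)
    (s : Fin n → ℝ) (lam : ℝ)
    (xu : Fin n → ℝ) (hxu : ∀ j, 0 < xu j)
    (ζ : Fin N → Fin n → ℝ)
    (pstar : EuclideanSpace ℝ (Fin n))
    (hnd : ∀ i j, (B.mulVec pstar + ζ i) j ≠ 0 ∧ (B.mulVec pstar + ζ i) j ≠ xu j)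
    (ω : Fin N → Fin n → ℝ)
    (hω : ∀ i j, ω i j =
      if 0 < (B.mulVec pstar + ζ i) j ∧ (B.mulVec pstar + ζ i) j < xu j then 1 else 0) :
    HasGradientAt
      (fun p : EuclideanSpace ℝ (Fin n) =>
        lam / 2 * ‖p‖ ^ 2 +
          (1 / N : ℝ) * ∑ i : Fin N,
            ((1 / 2 : ℝ) * (Q.mulVec (boxProj xu (B.mulVec p + ζ i)) ⬝ᵥ
                boxProj xu (B.mulVec p + ζ i)) -
              s ⬝ᵥ boxProj xu (B.mulVec p + ζ i)))
      ((EuclideanSpace.equiv (Fin n) ℝ).symm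
        (lam • (EuclideanSpace.equiv (Fin n) ℝ pstar) +
          Bᵀ.mulVec ((1 / N : ℝ) • ∑ i : Fin N,
            (Matrix.diagonal (ω i)).mulVec
              (Q.mulVec (boxProj xu (B.mulVec pstar + ζ i)) - s))))
      pstar := by
  obtain rfl : ω = fun i => boxActivity xu (B *ᵥ pstar + ζ i) := funext₂ hω
  exact fN_gradient_at_nondegenerate_general B hQ s lam xu ζ pstar hnd
end

section
/- Let Q be a symmetric |R|×|R| real matrix with smallest eigenvalue λ_min(Q), B an |R|×|R| real matrix with ℓ2 operator norm ‖B‖₂, N ≥ 1, and J^{(1)}, …, J^{(N)} diagonal 0–1 matrices. Set Ã = (1/N)·Σ_{i=1}^N J^{(i)}·Q·J^{(i)}. If λ > −min(λ_min(Q), 0)·‖B‖₂², then the symmetric matrix λ·I + Bᵀ·Ã·B is positive definite, i.e. ⟨(λ·I + Bᵀ·Ã·B)·p, p⟩ > 0 for all p ≠ 0. -/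
open Matrix

/-!
In the Loewner order, `c • 1 ≤ Q` for `c = min λ_min(Q) 0`. A congruence `A ↦ Bᴴ A B` is monotone
and `Bᴴ B ≤ ‖B‖² • 1`, so for `c ≤ 0` it turns a bound `c • 1 ≤ A` into
`(c ‖B‖²) • 1 ≤ Bᴴ A B`. Congruence by a contraction thus keeps the bound, as does averaging, and
the congruence by `B` costs the factor `‖B‖²`, which `λ` outweighs.
-/

section LoewnerOrder

open scoped ComplexOrder MatrixOrder Matrix.Norms.L2Operator

variable {𝕜 k m n ι : Type*} [RCLike 𝕜]

lemma conjTranspose_mul_mul_mono [Fintype m] [Finite n] {A A' : Matrix m m 𝕜}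
    (h : A ≤ A') (B : Matrix m n 𝕜) : Bᴴ * A * B ≤ Bᴴ * A' * B := by
  have hdiff : (Bᴴ * (A' - A) * B).PosSemidef := h.conjTranspose_mul_mul_same B
  rwa [Matrix.mul_sub, Matrix.sub_mul] at hdiff

lemma posDef_smul_one_add_of_smul_one_le [DecidableEq n] {A : Matrix n n 𝕜} {c lam : ℝ}
    (hA : c • (1 : Matrix n n 𝕜) ≤ A) (hlam : -c < lam) :
    (lam • (1 : Matrix n n 𝕜) + A).PosDef := by
  have hpos : ((lam + c) • (1 : Matrix n n 𝕜)).PosDef := PosDef.one.smul (by linarith)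
  have hsplit : lam • (1 : Matrix n n 𝕜) + A = (lam + c) • 1 + (A - c • 1) := by module
  exact hsplit ▸ hpos.add_posSemidef hA

variable [Fintype k] [DecidableEq k] [Fintype m] [Fintype n] [DecidableEq n]

lemma smul_one_le_of_forall_le_eigenvalues {A : Matrix n n 𝕜} (hA : A.IsHermitian) {c : ℝ}
    (hc : ∀ i, c ≤ hA.eigenvalues i) : c • (1 : Matrix n n 𝕜) ≤ A := by
  rw [← Algebra.algebraMap_eq_smul_one, algebraMap_le_iff_le_spectrum (ha := hA.isSelfAdjoint),
    hA.spectrum_real_eq_range_eigenvalues]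
  exact Set.forall_mem_range.2 hc

lemma min_iInf_eigenvalues_zero_smul_one_le {A : Matrix n n 𝕜} (hA : A.IsHermitian) :
    min (⨅ i, hA.eigenvalues i) 0 • (1 : Matrix n n 𝕜) ≤ A :=
  smul_one_le_of_forall_le_eigenvalues hA fun i ↦
    (min_le_left _ _).trans (ciInf_le (Set.finite_range _).bddBelow i)

lemma le_norm_smul_one_of_isHermitian {A : Matrix n n 𝕜} (hA : A.IsHermitian) :
    A ≤ ‖A‖ • (1 : Matrix n n 𝕜) := by
  nontriviality Matrix n n 𝕜
  rw [← Algebra.algebraMap_eq_smul_one, le_algebraMap_iff_spectrum_le (ha := hA.isSelfAdjoint)]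
  intro x hx
  have hx' : algebraMap ℝ 𝕜 x ∈ spectrum 𝕜 A := spectrum.algebraMap_mem 𝕜 hx
  calc x ≤ ‖algebraMap ℝ 𝕜 x‖ := by simpa using le_abs_self x
    _ ≤ ‖A‖ := spectrum.norm_le_norm_of_mem hx'

lemma conjTranspose_mul_self_le_norm_sq_smul_one (B : Matrix m n 𝕜) :
    Bᴴ * B ≤ ‖B‖ ^ 2 • (1 : Matrix n n 𝕜) := by
  have h := le_norm_smul_one_of_isHermitian (isHermitian_conjTranspose_mul_self B)
  rwa [l2_opNorm_conjTranspose_mul_self, ← sq] at h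

lemma norm_diagonal_le_one_of_eq_zero_or_eq_one {w : n → 𝕜} (hw : ∀ j, w j = 0 ∨ w j = 1) :
    ‖diagonal w‖ ≤ 1 := by
  rw [l2_opNorm_diagonal, pi_norm_le_iff_of_nonneg zero_le_one]
  intro j
  rcases hw j with h | h <;> simp [h]

variable [DecidableEq m]

lemma smul_one_le_conjTranspose_mul_mul {A : Matrix m m 𝕜} {c : ℝ} (hc : c ≤ 0)
    (hA : c • (1 : Matrix m m 𝕜) ≤ A) (B : Matrix m n 𝕜) :
    (c * ‖B‖ ^ 2) • (1 : Matrix n n 𝕜) ≤ Bᴴ * A * B := calc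
  (c * ‖B‖ ^ 2) • (1 : Matrix n n 𝕜) = c • ‖B‖ ^ 2 • (1 : Matrix n n 𝕜) := mul_smul ..
  _ ≤ c • (Bᴴ * B) :=
    smul_le_smul_of_nonpos_left (conjTranspose_mul_self_le_norm_sq_smul_one B) hc
  _ = Bᴴ * (c • (1 : Matrix m m 𝕜)) * B := by simp
  _ ≤ Bᴴ * A * B := conjTranspose_mul_mul_mono hA B

lemma smul_one_le_conjTranspose_mul_mul_of_norm_le_one {A : Matrix m m 𝕜} {c : ℝ} (hc : c ≤ 0)
    (hA : c • (1 : Matrix m m 𝕜) ≤ A) {J : Matrix m n 𝕜} (hJ : ‖J‖ ≤ 1) :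
    c • (1 : Matrix n n 𝕜) ≤ Jᴴ * A * J := by
  have hcJ : c ≤ c * ‖J‖ ^ 2 := by
    simpa using mul_le_mul_of_nonpos_left (pow_le_one₀ (n := 2) (norm_nonneg J) hJ) hc
  exact (smul_le_smul_of_nonneg_right hcJ zero_le_one).trans
    (smul_one_le_conjTranspose_mul_mul hc hA J)

theorem hessian_posdef_of_large_lambda_general {Q : Matrix k k 𝕜} (hQ : Q.IsHermitian)
    (B : Matrix m n 𝕜) {s : Finset ι} {μ : ι → ℝ} (hμ : ∀ i ∈ s, 0 ≤ μ i)
    (hμ_sum : ∑ i ∈ s, μ i = 1) {J : ι → Matrix k m 𝕜} (hJ : ∀ i ∈ s, ‖J i‖ ≤ 1) {lam : ℝ}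
    (hlam : -(min (⨅ i, hQ.eigenvalues i) 0 * ‖B‖ ^ 2) < lam) :
    (lam • (1 : Matrix n n 𝕜) + Bᴴ * (∑ i ∈ s, μ i • ((J i)ᴴ * Q * J i)) * B).PosDef := by
  set c := min (⨅ i, hQ.eigenvalues i) 0
  have hc : c ≤ 0 := min_le_right _ _
  have hJQ : ∀ i ∈ s, c • (1 : Matrix m m 𝕜) ≤ (J i)ᴴ * Q * J i := fun i hi ↦
    smul_one_le_conjTranspose_mul_mul_of_norm_le_one hc
      (min_iInf_eigenvalues_zero_smul_one_le hQ) (hJ i hi)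
  have hmean : c • (1 : Matrix m m 𝕜) ≤ ∑ i ∈ s, μ i • ((J i)ᴴ * Q * J i) :=
    (convex_Ici (𝕜 := ℝ) (c • (1 : Matrix m m 𝕜))).sum_mem hμ hμ_sum hJQ
  exact posDef_smul_one_add_of_smul_one_le (smul_one_le_conjTranspose_mul_mul hc hmean B) hlam

end LoewnerOrder

/-- With `Q` symmetric (smallest eigenvalue `λ_min(Q)`), `B` a square real
matrix with ℓ2 operator norm `‖B‖₂`, `N ≥ 1`, 0–1 diagonal matrices `J⁽ⁱ⁾` and
`Ã = (1/N) Σᵢ J⁽ⁱ⁾ Q J⁽ⁱ⁾`: if `λ > -min(λ_min(Q), 0) ‖B‖₂²`, then `λ I + Bᵀ Ã B` is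
positive definite, i.e. `⟨(λ I + Bᵀ Ã B) p, p⟩ > 0` for all `p ≠ 0`. -/
theorem hessian_posdef_of_large_lambda {n N : ℕ} (hN : 1 ≤ N)
    (Q : Matrix (Fin n) (Fin n) ℝ) (hQ : Q.IsHermitian)
    (B : Matrix (Fin n) (Fin n) ℝ)
    (w : Fin N → Fin n → ℝ) (hw : ∀ i j, w i j = 0 ∨ w i j = 1)
    (Atil : Matrix (Fin n) (Fin n) ℝ)
    (hAtil : Atil = (1 / N : ℝ) •
      ∑ i : Fin N, Matrix.diagonal (w i) * Q * Matrix.diagonal (w i))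
    (lam : ℝ)
    (hlam : lam > -(min (⨅ i, hQ.eigenvalues i) 0 * ‖Matrix.toEuclideanCLM (𝕜 := ℝ) B‖ ^ 2)) :
    ∀ p : Fin n → ℝ, p ≠ 0 →
      0 < (lam • (1 : Matrix (Fin n) (Fin n) ℝ) + Bᵀ * Atil * B).mulVec p ⬝ᵥ p := by
  have hweights : ∑ _i : Fin N, (1 / N : ℝ) = 1 := by simp [Nat.one_le_iff_ne_zero.1 hN]
  have hpos := hessian_posdef_of_large_lambda_general hQ B (fun _ _ ↦ by positivity) hweights
    (fun i _ ↦ norm_diagonal_le_one_of_eq_zero_or_eq_one (hw i)) hlam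
  intro p hp
  simpa [hAtil, Finset.smul_sum, dotProduct_comm] using hpos.dotProduct_mulVec_pos hp
end

section
/- For every λ > 0, the function f : ℝ → ℝ defined by f(p) = (λ/2)·p² − min( 1/2, max(0, −p) ) is not convex on ℝ. (Concretely, for 0 < ε < min(1/λ, 1/2) one has (1/2)·f(−ε) + (1/2)·f(ε) = (λ/2)·ε² − ε/2 < 0 = f(0), violating the midpoint convexity inequality at the points −ε and ε.) -/
/-!
Near `0` the optimal response contributes `-max 0 (-p)`, a concave kink whose symmetric second
difference at step `ε` is `-ε`. The regularizer `(λ/2) p²` only adds `λ ε²`, so for small `ε` the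
linear term wins and the graph at `0` lies above the chord from `-ε` to `ε`.
-/

/-- The scalar optimal response to the price `p`: the projection of `-p` onto `[0, cap]`, which is
`x(p) = proj_{[0, x_u]}(B p + ζ)` for `B = -1`, `ζ = 0` and `x_u = cap`. -/
def cappedResponse {α : Type*} [AddGroup α] [LinearOrder α] (cap p : α) : α :=
  min cap (max 0 (-p))

/-- The single-sample scalar objective `f_N` for `Q = 0` and `s = 1`: a quadratic regularizer of
weight `lam` minus the capped response. -/
def scalarObjective {𝕜 : Type*} [Field 𝕜] [LinearOrder 𝕜] (lam cap p : 𝕜) : 𝕜 :=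
  lam / 2 * p ^ 2 - cappedResponse cap p

section Response

variable {α : Type*} [AddGroup α] [LinearOrder α] {cap p : α}

lemma cappedResponse_neg (hp : 0 ≤ p) (hcap : p ≤ cap) : cappedResponse cap (-p) = p := by
  rw [cappedResponse, neg_neg, max_eq_right hp, min_eq_right hcap]

lemma cappedResponse_of_nonneg [AddLeftMono α] (hcap : 0 ≤ cap) (hp : 0 ≤ p) :
    cappedResponse cap p = 0 := by
  rw [cappedResponse, max_eq_left (neg_nonpos.2 hp), min_eq_right hcap]

end Response

section Objective

variable {𝕜 : Type*} [Field 𝕜] [LinearOrder 𝕜] [IsStrictOrderedRing 𝕜] {lam cap ε : 𝕜}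

lemma scalarObjective_zero (hcap : 0 ≤ cap) : scalarObjective lam cap 0 = 0 := by
  rw [scalarObjective, cappedResponse_of_nonneg hcap le_rfl]
  ring

lemma scalarObjective_midpoint_eq (hε : 0 ≤ ε) (hcap : ε ≤ cap) :
    1 / 2 * scalarObjective lam cap (-ε) + 1 / 2 * scalarObjective lam cap ε =
      lam / 2 * ε ^ 2 - ε / 2 := by
  rw [scalarObjective, scalarObjective, cappedResponse_neg hε hcap,
    cappedResponse_of_nonneg (hε.trans hcap) hε]
  ring

lemma scalarObjective_midpoint_lt (hε : 0 < ε) (hlam : lam * ε < 1) (hcap : ε ≤ cap) :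
    1 / 2 * scalarObjective lam cap (-ε) + 1 / 2 * scalarObjective lam cap ε <
      scalarObjective lam cap 0 :=
  calc
    1 / 2 * scalarObjective lam cap (-ε) + 1 / 2 * scalarObjective lam cap ε
      = lam / 2 * ε ^ 2 - ε / 2 := scalarObjective_midpoint_eq hε.le hcap
    _ = ε / 2 * (lam * ε - 1) := by ring
    _ < 0 := mul_neg_of_pos_of_neg (half_pos hε) (sub_neg.2 hlam)
    _ = scalarObjective lam cap 0 := (scalarObjective_zero (hε.le.trans hcap)).symm

end Objective

lemma not_convexOn_of_midpoint_lt {𝕜 E β : Type*} [Field 𝕜] [LinearOrder 𝕜]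
    [IsStrictOrderedRing 𝕜] [AddCommMonoid E] [SMul 𝕜 E] [AddCommMonoid β] [PartialOrder β]
    [SMul 𝕜 β] {s : Set E} {f : E → β} {x y : E} (hx : x ∈ s) (hy : y ∈ s)
    (h : (1 / 2 : 𝕜) • f x + (1 / 2 : 𝕜) • f y < f ((1 / 2 : 𝕜) • x + (1 / 2 : 𝕜) • y)) :
    ¬ ConvexOn 𝕜 s f := fun hf =>
  h.not_ge (hf.2 hx hy one_half_pos.le one_half_pos.le (add_halves 1))

lemma exists_pos_mul_lt_one_and_lt {𝕜 : Type*} [Field 𝕜] [LinearOrder 𝕜]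
    [IsStrictOrderedRing 𝕜] (lam : 𝕜) {cap : 𝕜} (hcap : 0 < cap) :
    ∃ ε : 𝕜, 0 < ε ∧ lam * ε < 1 ∧ ε < cap := by
  obtain ⟨ε, hε, hmax⟩ := exists_pos_mul_lt one_pos (max lam cap⁻¹)
  refine ⟨ε, hε, ?_, ?_⟩
  · exact (mul_le_mul_of_nonneg_right (le_max_left lam cap⁻¹) hε.le).trans_lt hmax
  · exact (inv_mul_lt_one₀ hcap).1
      ((mul_le_mul_of_nonneg_right (le_max_right lam cap⁻¹) hε.le).trans_lt hmax)

theorem scalar_objective_nonconvex_general {𝕜 : Type*} [Field 𝕜] [LinearOrder 𝕜]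
    [IsStrictOrderedRing 𝕜] (lam : 𝕜) {cap : 𝕜} (hcap : 0 < cap) :
    ¬ ConvexOn 𝕜 Set.univ (scalarObjective lam cap) ∧
      ∀ ε : 𝕜, 0 < ε → lam * ε < 1 → ε ≤ cap →
        1 / 2 * scalarObjective lam cap (-ε) + 1 / 2 * scalarObjective lam cap ε <
          scalarObjective lam cap 0 := by
  refine ⟨?_, fun ε => scalarObjective_midpoint_lt⟩
  obtain ⟨ε, hε, hlam, hlt⟩ := exists_pos_mul_lt_one_and_lt lam hcap
  have hmid : (1 / 2 : 𝕜) • (-ε) + (1 / 2 : 𝕜) • ε = 0 := by rw [smul_neg, neg_add_cancel]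
  apply not_convexOn_of_midpoint_lt (Set.mem_univ (-ε)) (Set.mem_univ ε)
  rw [hmid, smul_eq_mul, smul_eq_mul]
  exact scalarObjective_midpoint_lt hε hlam hlt.le

/-- For every `λ > 0`, the function
`f(p) = (λ/2) p² - min(1/2, max(0, -p))` is not convex on `ℝ`; concretely, for every
`0 < ε < min(1/λ, 1/2)` the midpoint convexity inequality fails at `-ε` and `ε`:
`(1/2) f(-ε) + (1/2) f(ε) < f(0)`. -/
theorem scalar_objective_nonconvex (lam : ℝ) (hlam : 0 < lam) :
    ¬ ConvexOn ℝ Set.univ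
        (fun p : ℝ => lam / 2 * p ^ 2 - min (1 / 2) (max 0 (-p))) ∧
      ∀ ε : ℝ, 0 < ε → ε < min (1 / lam) (1 / 2) →
        (1 / 2) * (lam / 2 * (-ε) ^ 2 - min (1 / 2) (max 0 (-(-ε)))) +
            (1 / 2) * (lam / 2 * ε ^ 2 - min (1 / 2) (max 0 (-ε))) <
          lam / 2 * (0 : ℝ) ^ 2 - min (1 / 2) (max 0 (-(0 : ℝ))) := by
  obtain ⟨hconvex, hmid⟩ := scalar_objective_nonconvex_general lam (one_half_pos (α := ℝ))
  exact ⟨hconvex, fun ε hε hlt =>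
    hmid ε hε ((lt_div_iff₀' hlam).1 (lt_min_iff.1 hlt).1) (lt_min_iff.1 hlt).2.le⟩
end
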